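/- Let q be a power of an odd prime p and let d := gcd(3, q+1). Every irreducible complex character of the Borel subgroup B of SU_3(q) of degree (q²−1)/d whose character field is not contained in ℝ has unitary discriminant 1. -/

import Mathlib

open Matrix

noncomputable section

namespace Paper

/-- The character of a matrix representation. -/
def charOf {G : Type} [Group G] {n : ℕ} (ρ : G →* GL (Fin n) ℂ) : G → ℂ :=
  fun g => Matrix.trace ((ρ g : Matrix (Fin n) (Fin n) ℂ))

/-- Irreducibility of a complex matrix representation. -/
def IsIrredRep {G : Type} [Group G] {n : ℕ} (ρ : G →* GL (Fin n) ℂ) : Prop :=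
  0 < n ∧ ∀ W : Submodule ℂ (Fin n → ℂ),
    (∀ (g : G), ∀ v ∈ W, (ρ g : Matrix (Fin n) (Fin n) ℂ).mulVec v ∈ W) → W = ⊥ ∨ W = ⊤

/-- `χ` is an irreducible complex character of `G`. -/
def IsIrrChar {G : Type} [Group G] (χ : G → ℂ) : Prop :=
  ∃ (n : ℕ) (ρ : G →* GL (Fin n) ℂ), IsIrredRep ρ ∧ χ = charOf ρ

/-- The character field `ℚ(χ)`, as a subfield of `ℂ`. -/
def charField {G : Type} [Group G] (χ : G → ℂ) : Subfield ℂ :=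
  Subfield.closure (Set.range χ)

/-- The subfield of real numbers inside `ℂ`. -/
def realsIn : Subfield ℂ := Subfield.closure (Set.range ((↑) : ℝ → ℂ))

/-- The character field of `χ` is not contained in `ℝ`. -/
def NotReal {G : Type} [Group G] (χ : G → ℂ) : Prop := ¬ charField χ ≤ realsIn

/-- `χ` has unitary discriminant `d`. -/
def HasUnitaryDisc {G : Type} [Group G] (χ : G → ℂ) (d : ℂ) : Prop :=
  ∀ (n : ℕ) (ρ : G →* GL (Fin n) ℂ),
    χ = charOf ρ →
    (∀ g i j, ((ρ g : Matrix (Fin n) (Fin n) ℂ)) i j ∈ charField χ) →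
    ∀ H : Matrix (Fin n) (Fin n) ℂ,
      (∀ i j, H i j ∈ charField χ) →
      IsUnit H.det →
      H.conjTranspose = H →
      (∀ g, ((ρ g : Matrix (Fin n) (Fin n) ℂ)).conjTranspose * H *
        (ρ g : Matrix (Fin n) (Fin n) ℂ) = H) →
      ∃ z ∈ charField χ, z ≠ 0 ∧
        (-1 : ℂ) ^ (n * (n - 1) / 2) * H.det = d * (z * (starRingEnd ℂ) z)

/-- `χ` has orthogonal discriminant `d`. -/
def HasOrthDisc {G : Type} [Group G] (χ : G → ℂ) (d : ℂ) : Prop :=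
  ∀ (n : ℕ) (ρ : G →* GL (Fin n) ℂ),
    χ = charOf ρ →
    (∀ g i j, ((ρ g : Matrix (Fin n) (Fin n) ℂ)) i j ∈ charField χ) →
    ∀ H : Matrix (Fin n) (Fin n) ℂ,
      (∀ i j, H i j ∈ charField χ) →
      IsUnit H.det →
      H.transpose = H →
      (∀ g, ((ρ g : Matrix (Fin n) (Fin n) ℂ)).transpose * H *
        (ρ g : Matrix (Fin n) (Fin n) ℂ) = H) →
      ∃ z ∈ charField χ, z ≠ 0 ∧
        (-1 : ℂ) ^ (n * (n - 1) / 2) * H.det = d * z ^ 2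

/-- `χ` is a rational character. -/
def IsRationalChar {G : Type} [Group G] (χ : G → ℂ) : Prop :=
  ∀ g, ∃ r : ℚ, χ g = (r : ℂ)

/-- `χ` is the character of a representation over `ℚ`. -/
def RealizableOverQ {G : Type} [Group G] (χ : G → ℂ) : Prop :=
  ∃ (n : ℕ) (ρ : G →* GL (Fin n) ℂ), χ = charOf ρ ∧
    ∀ g i j, ∃ r : ℚ, ((ρ g : Matrix (Fin n) (Fin n) ℂ)) i j = (r : ℂ)

end Paper

namespace Paper

variable (p k : ℕ) (F : Type) [Field F] [Fintype F] [ExpChar F p]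

/-- The Gram matrix `Ω` (anti-diagonal ones). -/
def Om : Matrix (Fin 3) (Fin 3) F :=
  Matrix.of fun i j => if (i : ℕ) + (j : ℕ) = 2 then 1 else 0

/-- Entrywise `q`-power Frobenius `Φ` on `3×3` matrices, where `q = p^k`. -/
def Phi : Matrix (Fin 3) (Fin 3) F →+* Matrix (Fin 3) (Fin 3) F :=
  (iterateFrobenius F p k).mapMatrix

/-- The special unitary group `SU₃(q) = {g ∈ SL₃(F_{q²}) : Φ(g)ᵀ·Ω·g = Ω}`. -/
def SU3 : Subgroup (Matrix.SpecialLinearGroup (Fin 3) F) where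
  carrier := {g | (Phi p k F g.val)ᵀ * Om F * g.val = Om F}
  one_mem' := by
    show (Phi p k F (1 : Matrix.SpecialLinearGroup (Fin 3) F).val)ᵀ * Om F *
        (1 : Matrix.SpecialLinearGroup (Fin 3) F).val = Om F
    simp
  mul_mem' := by
    intro a b ha hb
    show (Phi p k F (a.val * b.val))ᵀ * Om F * (a.val * b.val) = Om F
    have ha' : (Phi p k F a.val)ᵀ * Om F * a.val = Om F := ha
    have hb' : (Phi p k F b.val)ᵀ * Om F * b.val = Om F := hb
    calc (Phi p k F (a.val * b.val))ᵀ * Om F * (a.val * b.val)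
        = (Phi p k F b.val)ᵀ * ((Phi p k F a.val)ᵀ * Om F * a.val) * b.val := by
          rw [_root_.map_mul, Matrix.transpose_mul]; simp only [Matrix.mul_assoc]
      _ = (Phi p k F b.val)ᵀ * Om F * b.val := by rw [ha']
      _ = Om F := hb'
  inv_mem' := by
    intro a ha
    show (Phi p k F (a⁻¹).val)ᵀ * Om F * (a⁻¹).val = Om F
    have ha' : (Phi p k F a.val)ᵀ * Om F * a.val = Om F := ha
    have h1 : a.val * (a⁻¹).val = 1 := by
      rw [← Matrix.SpecialLinearGroup.coe_mul, mul_inv_cancel,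
        Matrix.SpecialLinearGroup.coe_one]
    nth_rewrite 1 [← ha']
    calc (Phi p k F (a⁻¹).val)ᵀ * ((Phi p k F a.val)ᵀ * Om F * a.val) * (a⁻¹).val
        = (Phi p k F a.val * Phi p k F (a⁻¹).val)ᵀ * Om F * (a.val * (a⁻¹).val) := by
          rw [Matrix.transpose_mul]; simp only [Matrix.mul_assoc]
      _ = Om F := by rw [← _root_.map_mul, h1, _root_.map_one, Matrix.transpose_one,
            Matrix.one_mul, Matrix.mul_one]

end Paper

namespace Paper

variable (p k : ℕ) (F : Type) [Field F] [Fintype F] [ExpChar F p]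

/-- The Borel subgroup of `SU₃(q)`: the upper triangular matrices in `SU₃(q)`. -/
def Borel : Subgroup ↥(SU3 p k F) where
  carrier := {g | Matrix.BlockTriangular ((g : Matrix.SpecialLinearGroup (Fin 3) F) :
    Matrix (Fin 3) (Fin 3) F) id}
  one_mem' := by
    show Matrix.BlockTriangular ((1 : Matrix.SpecialLinearGroup (Fin 3) F) :
      Matrix (Fin 3) (Fin 3) F) id
    rw [Matrix.SpecialLinearGroup.coe_one]
    exact Matrix.blockTriangular_one
  mul_mem' := by
    intro a b ha hb
    exact Matrix.BlockTriangular.mul ha hb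
  inv_mem' := by
    intro a ha
    show Matrix.BlockTriangular (((a⁻¹ : ↥(SU3 p k F)) : Matrix.SpecialLinearGroup (Fin 3) F) :
      Matrix (Fin 3) (Fin 3) F) id
    have hcoe : (((a⁻¹ : ↥(SU3 p k F)) : Matrix.SpecialLinearGroup (Fin 3) F) :
        Matrix (Fin 3) (Fin 3) F)
        = (((a : ↥(SU3 p k F)) : Matrix.SpecialLinearGroup (Fin 3) F) :
          Matrix (Fin 3) (Fin 3) F)⁻¹ := by
      rw [show ((a⁻¹ : ↥(SU3 p k F)) : Matrix.SpecialLinearGroup (Fin 3) F)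
        = ((a : ↥(SU3 p k F)) : Matrix.SpecialLinearGroup (Fin 3) F)⁻¹ from rfl]
      rw [Matrix.SpecialLinearGroup.coe_inv, Matrix.inv_def,
        ((a : ↥(SU3 p k F)) : Matrix.SpecialLinearGroup (Fin 3) F).2]
      simp
    rw [hcoe]
    haveI : Invertible (((a : ↥(SU3 p k F)) : Matrix.SpecialLinearGroup (Fin 3) F) :
        Matrix (Fin 3) (Fin 3) F) := by
      apply Matrix.invertibleOfIsUnitDet
      rw [((a : ↥(SU3 p k F)) : Matrix.SpecialLinearGroup (Fin 3) F).2]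
      exact isUnit_one
    exact Matrix.blockTriangular_inv_of_blockTriangular ha

end Paper

namespace Paper

/-!
Let `U` be the unipotent radical of `B`, with centre `Z`, and let `ρ` afford `χ`, of degree `n`.
Here `p ∤ n`. If `Z` had no invariants, then `χ` would vanish on the nontrivial powers of an element
`u` of order `p`, because `u ^ i` is conjugate to all of its translates by `Z`; restricting to `⟨u⟩`
would give `p ∣ n`. So `Z` acts trivially, and `U / Z` acts through a map `r` from the additive
group of `F = F_{q²}`, whose values sum to zero since `U` has no invariants.

Let `η` be the quadratic character of `F`. The Gauss sum `G = ∑ η(a) r(a)` satisfies `G² = q²`,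
because `-1` is a square in `F`, and `G` is self-adjoint for every invariant Hermitian form `H`.
For a nonsquare `s`, the torus element `t` of parameter `s` is an isometry with
`ρ(t) G = -G ρ(t)`. Hence `ρ(t)` isometrically exchanges the two eigenspaces of the involution
`q⁻¹ G`, which are orthogonal: if `D` is the Gram matrix of `H` on one of them and `c` the
determinant of the change of basis, then `det H = (det D)² / (c * star c)` is a norm. The sign in
the discriminant disappears because `8 ∣ n`.
-/

section HyperbolicDecomposition

variable {K n : Type*} [Field K] [Fintype n] [DecidableEq n]

theorem map_range_eq_ker_of_isIdempotentElem {V : Type*} [AddCommGroup V] [Module K V]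
    {P : Module.End K V} (hP : IsIdempotentElem P) (g : V ≃ₗ[K] V)
    (hgP : (g : V →ₗ[K] V) ∘ₗ P = (1 - P) ∘ₗ g) :
    P.range.map (g : V →ₗ[K] V) = P.ker := by
  rw [LinearMap.IsIdempotentElem.ker_eq_range hP, ← LinearMap.range_comp, hgP,
    LinearMap.range_comp_of_range_eq_top _ g.range]
  rfl

theorem exists_isUnit_det_fromCols {P g : Matrix n n K} (hP : IsIdempotentElem P)
    (hg : IsUnit g) (hgP : g * P = (1 - P) * g) :
    ∃ (m : ℕ) (A : Matrix n (Fin m) K) (e : n ≃ Fin m ⊕ Fin m),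
      P * A = A ∧ IsUnit ((fromCols A (g * A)).submatrix id e).det := by
  let W := (toLin' P).range
  have hP' : IsIdempotentElem (toLin' P) := hP.map (toLinAlgEquiv' (R := K))
  let gE : (n → K) ≃ₗ[K] (n → K) :=
    toLinearEquiv' g (invertibleOfIsUnitDet g ((isUnit_iff_isUnit_det g).1 hg))
  have hgE (v : n → K) : gE v = g *ᵥ v := rfl
  have hcompl : IsCompl W (W.map (gE : (n → K) →ₗ[K] (n → K))) := by
    rw [map_range_eq_ker_of_isIdempotentElem hP']
    · exact LinearMap.IsIdempotentElem.isCompl hP'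
    · refine LinearMap.ext fun v => ?_
      change g *ᵥ (P *ᵥ v) = g *ᵥ v - P *ᵥ (g *ᵥ v)
      rw [mulVec_mulVec, hgP, ← mulVec_mulVec, sub_mulVec, one_mulVec]
  let b := Module.finBasis K W
  let B := (b.prod (b.map (gE.submoduleMap W))).map (Submodule.prodEquivOfIsCompl _ _ hcompl)
  let e := (Pi.basisFun K n).indexEquiv B
  let A : Matrix n (Fin (Module.finrank K W)) K := of fun i j => (b j : n → K) i
  have hB : (fromCols A (g * A)).submatrix id e =
      (Pi.basisFun K n).toMatrix (B.reindex e.symm) := by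
    ext i j
    rcases h : e j with x | x <;>
      simp [Module.Basis.toMatrix_apply, h, B, hgE, A, mul_apply, mulVec, dotProduct]
  refine ⟨_, A, e, ?_, ?_⟩
  · ext i j
    have hbj : P *ᵥ (b j : n → K) = b j :=
      (LinearMap.IsIdempotentElem.mem_range_iff hP').1 (b j).2
    exact congrFun hbj i
  · rw [hB, ← Module.Basis.det_apply]
    exact (Pi.basisFun K n).isUnit_det _

variable [StarRing K]

-- The image of `P` and its translate by `g` are orthogonal and isometric.
theorem exists_det_eq_mul_star {H P g : Matrix n n K} (hH : H.IsHermitian)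
    (hP : IsIdempotentElem P) (hPH : Pᴴ * H = H * P) (hg : IsUnit g) (hgH : gᴴ * H * g = H)
    (hgP : g * P = (1 - P) * g) : ∃ z, H.det = z * star z := by
  obtain ⟨m, A, e, hPA, hdet⟩ := exists_isUnit_det_fromCols hP hg hgP
  set C := fromCols A (g * A)
  set D := Aᴴ * H * A with hD
  have hPgA : P * (g * A) = 0 := by
    nth_rw 1 [← hPA]
    rw [← Matrix.mul_assoc g, hgP, ← Matrix.mul_assoc, ← Matrix.mul_assoc,
      hP.mul_one_sub_self, Matrix.zero_mul, Matrix.zero_mul]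
  have horth : Aᴴ * H * (g * A) = 0 := by
    rw [← hPA, conjTranspose_mul, Matrix.mul_assoc Aᴴ, hPH, hPA, Matrix.mul_assoc,
      Matrix.mul_assoc, hPgA, Matrix.mul_zero, Matrix.mul_zero]
  have hisom : (g * A)ᴴ * H * (g * A) = D := by
    rw [hD]
    nth_rw 2 [← hgH]
    simp only [conjTranspose_mul, Matrix.mul_assoc]
  have hgram : Cᴴ * H * C = fromBlocks D 0 ((g * A)ᴴ * H * A) D := by
    rw [conjTranspose_fromCols_eq_fromRows_conjTranspose, fromRows_mul, fromRows_mul_fromCols,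
      horth, hisom]
  have hDstar : star D.det = D.det := by
    rw [← det_conjTranspose, (isHermitian_conjTranspose_mul_mul A hH).eq]
  set c := (C.submatrix id e).det
  have hdetH : star c * H.det * c = D.det * D.det := by
    rw [← det_conjTranspose, ← det_mul, ← det_mul, ← det_fromBlocks_zero₁₂, ← hgram,
      ← det_submatrix_equiv_self e]
    rfl
  have hc : c ≠ 0 := hdet.ne_zero
  have hc' : star c ≠ 0 := star_ne_zero.2 hc
  refine ⟨D.det / c, ?_⟩
  rw [star_div₀, hDstar, div_mul_div_comm, ← hdetH]
  field_simp

theorem exists_map_subtype_eq {E : Type*} [Field E] {L : Subfield E} {M : Matrix n n E}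
    (hM : M ∈ L.toSubring.matrix) : ∃ M₀ : Matrix n n L, M₀.map L.subtype = M :=
  ⟨of fun i j => ⟨M i j, hM i j⟩, rfl⟩

/-- The star operation that `K` induces on a star-closed subfield, so that statements over a field
with star descend to `L`. -/
abbrev starRingOfStarMem (L : Subfield K) (hL : ∀ x ∈ L, star x ∈ L) : StarRing L where
  star x := ⟨star x, hL x x.2⟩
  star_involutive _ := Subtype.ext (star_star _)
  star_mul _ _ := Subtype.ext (star_mul _ _)
  star_add _ _ := Subtype.ext (star_add _ _)

theorem exists_mem_det_eq_mul_star {L : Subfield K} (hL : ∀ x ∈ L, star x ∈ L)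
    {H P g : Matrix n n K} (hHL : H ∈ L.toSubring.matrix) (hPL : P ∈ L.toSubring.matrix)
    (hgL : g ∈ L.toSubring.matrix) (hH : H.IsHermitian)
    (hP : IsIdempotentElem P) (hPH : Pᴴ * H = H * P) (hg : IsUnit g) (hgH : gᴴ * H * g = H)
    (hgP : g * P = (1 - P) * g) : ∃ z ∈ L, H.det = z * star z := by
  let := starRingOfStarMem L hL
  obtain ⟨H, rfl⟩ := exists_map_subtype_eq hHL
  obtain ⟨P, rfl⟩ := exists_map_subtype_eq hPL
  obtain ⟨g, rfl⟩ := exists_map_subtype_eq hgL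
  have map_star (M : Matrix n n L) : (M.map L.subtype)ᴴ = Mᴴ.map L.subtype := rfl
  have map_inj : Function.Injective fun M : Matrix n n L => M.map L.subtype :=
    map_injective L.subtype.injective
  have map_one_sub : 1 - P.map L.subtype = (1 - P).map L.subtype := by
    rw [← RingHom.mapMatrix_apply, ← RingHom.mapMatrix_apply, map_sub, map_one]
  have hg' : IsUnit g := by
    rwa [isUnit_iff_isUnit_det, ← RingHom.mapMatrix_apply, ← RingHom.map_det, isUnit_map_iff,
      ← isUnit_iff_isUnit_det] at hg
  simp only [map_star, map_one_sub, ← Matrix.map_mul] at hPH hgH hgP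
  obtain ⟨z, hz⟩ := exists_det_eq_mul_star (map_inj hH)
    (map_inj (Matrix.map_mul.trans hP)) (map_inj hPH) hg' (map_inj hgH) (map_inj hgP)
  refine ⟨z, z.2, ?_⟩
  rw [← RingHom.mapMatrix_apply, ← RingHom.map_det, hz]
  rfl

end HyperbolicDecomposition

section GaussSum

variable {F A : Type*} [Field F] [Fintype F] [DecidableEq F] [Ring A]

theorem ne_zero_of_quadraticChar_eq_neg_one {c : F} (hc : quadraticChar F c = -1) : c ≠ 0 := by
  rintro rfl
  simp at hc

theorem quadraticChar_sq_div_pow {s : F} (hs : quadraticChar F s = -1) {m : ℕ} (hm : Odd m) :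
    quadraticChar F (s ^ 2 / s ^ m) = -1 := by
  have hs0 := ne_zero_of_quadraticChar_eq_neg_one hs
  have h := congrArg (quadraticChar F) (div_mul_cancel₀ (s ^ 2) (pow_ne_zero m hs0))
  rw [map_mul, map_pow, map_pow, hs, hm.neg_one_pow] at h
  linear_combination -h

theorem sum_quadraticChar_mul_quadraticChar_sub (hF : ringChar F ≠ 2) (c : F) :
    ∑ x, quadraticChar F x * quadraticChar F (c - x) =
      quadraticChar F (-1) * ((if c = 0 then (Fintype.card F : ℤ) else 0) - 1) := by
  rcases eq_or_ne c 0 with rfl | hc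
  · have hterm (x : F) : quadraticChar F x * quadraticChar F (0 - x) =
        quadraticChar F (-1) * (1 - if x = 0 then 1 else 0) := by
      rcases eq_or_ne x 0 with rfl | hx
      · simp
      · rw [zero_sub, neg_eq_neg_one_mul, map_mul, if_neg hx]
        linear_combination quadraticChar F (-1) * quadraticChar_sq_one hx
    rw [Finset.sum_congr rfl fun x _ => hterm x, ← Finset.mul_sum, Finset.sum_sub_distrib]
    simp
  · have hjacobi : ∑ x, quadraticChar F x * quadraticChar F (1 - x) = -quadraticChar F (-1) := by
      simpa only [(quadraticChar_isQuadratic F).inv, jacobiSum] using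
        jacobiSum_nontrivial_inv (quadraticChar_ne_one hF)
    rw [if_neg hc, zero_sub, mul_neg_one, ← hjacobi, ← Equiv.sum_comp (Equiv.mulLeft₀ c hc)]
    refine Finset.sum_congr rfl fun x _ => ?_
    rw [Equiv.mulLeft₀_apply, show c - c * x = c * (1 - x) by ring, map_mul, map_mul]
    linear_combination (quadraticChar F x * quadraticChar F (1 - x)) * quadraticChar_sq_one hc

/-- The quadratic Gauss sum of an additive character with values in a (possibly noncommutative)
ring; Mathlib's `gaussSum` needs a commutative one. -/
def quadraticGaussSum (r : AddChar F A) : A := ∑ a, quadraticChar F a • r a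

theorem quadraticGaussSum_mul_self (hF : ringChar F ≠ 2) {r : AddChar F A}
    (hr : ∑ a, r a = 0) :
    quadraticGaussSum r * quadraticGaussSum r =
      ((quadraticChar F (-1) * Fintype.card F : ℤ) : A) := by
  calc quadraticGaussSum r * quadraticGaussSum r
    _ = ∑ x, ∑ c, (quadraticChar F x * quadraticChar F (c - x)) • r c := by
      simp only [quadraticGaussSum, Finset.sum_mul_sum]
      refine Finset.sum_congr rfl fun x _ => ?_
      rw [← Equiv.sum_comp (Equiv.subRight x)]
      refine Finset.sum_congr rfl fun c _ => ?_
      rw [Equiv.subRight_apply, smul_mul_smul_comm, ← AddChar.map_add_eq_mul,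
        add_sub_cancel]
    _ = ∑ c, (quadraticChar F (-1) * ((if c = 0 then (Fintype.card F : ℤ) else 0) - 1)) • r c := by
      rw [Finset.sum_comm]
      simp only [← Finset.sum_smul, sum_quadraticChar_mul_quadraticChar_sub hF]
    _ = ((quadraticChar F (-1) * Fintype.card F : ℤ) : A) := by
      simp [-quadraticChar_apply, mul_sub, sub_smul, Finset.sum_sub_distrib, ← Finset.mul_sum, hr]

theorem mul_quadraticGaussSum (r : AddChar F A) {c : F} (hc : c ≠ 0) {g : A}
    (hg : ∀ a, g * r a = r (c * a) * g) :
    g * quadraticGaussSum r = quadraticChar F c • (quadraticGaussSum r * g) := by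
  rw [quadraticGaussSum, Finset.mul_sum, Finset.sum_mul, Finset.smul_sum,
    ← Equiv.sum_comp (Equiv.mulLeft₀ c hc) fun a =>
      quadraticChar F c • (quadraticChar F a • r a * g)]
  refine Finset.sum_congr rfl fun a _ => ?_
  rw [Equiv.mulLeft₀_apply, map_mul, smul_mul_assoc, smul_smul, ← mul_assoc, ← sq,
    quadraticChar_sq_one hc, one_mul, mul_smul_comm, hg]

theorem conjTranspose_quadraticGaussSum_mul {K n : Type*} [CommRing K] [StarRing K] [Fintype n]
    [DecidableEq n] (r : AddChar F (Matrix n n K)) {H : Matrix n n K}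
    (hr : ∀ a, (r a)ᴴ * H = H * r (-a)) :
    (quadraticGaussSum r)ᴴ * H = quadraticChar F (-1) • (H * quadraticGaussSum r) := by
  rw [quadraticGaussSum, conjTranspose_sum, Finset.sum_mul, Finset.mul_sum, Finset.smul_sum,
    ← Equiv.sum_comp (Equiv.neg F) fun a => (quadraticChar F a • r a)ᴴ * H]
  refine Finset.sum_congr rfl fun a _ => ?_
  rw [Equiv.neg_apply, neg_eq_neg_one_mul a, map_mul, ← neg_eq_neg_one_mul, conjTranspose_smul,
    star_trivial, smul_mul_assoc, hr, neg_neg, mul_smul_comm, smul_smul]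

end GaussSum

section NormDeterminant

theorem conjTranspose_mul_eq_mul_of_mul_eq_one {R n : Type*} [CommRing R] [StarRing R] [Fintype n]
    [DecidableEq n] {H M M' : Matrix n n R} (hM : Mᴴ * H * M = H) (hMM' : M * M' = 1) :
    Mᴴ * H = H * M' := by
  rw [← Matrix.mul_one (Mᴴ * H), ← hMM', ← Matrix.mul_assoc, hM]

theorem quadraticChar_neg_one_of_card_eq_sq {F : Type*} [Field F] [Fintype F] [DecidableEq F]
    {q : ℕ} (hcard : Fintype.card F = q ^ 2) : quadraticChar F (-1) = 1 := by
  rw [quadraticChar_one_iff_isSquare (neg_ne_zero.2 one_ne_zero),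
    FiniteField.isSquare_neg_one_iff, hcard, Nat.pow_mod]
  have := Nat.mod_lt q four_pos
  interval_cases q % 4 <;> decide

variable {K n : Type*} [Field K] [StarRing K] [CharZero K] [Fintype n] [DecidableEq n]

theorem exists_mem_det_eq_mul_star_of_involution {L : Subfield K} (hL : ∀ x ∈ L, star x ∈ L)
    {H S g : Matrix n n K} (hHL : H ∈ L.toSubring.matrix) (hSL : S ∈ L.toSubring.matrix)
    (hgL : g ∈ L.toSubring.matrix) (hH : H.IsHermitian) (hS : S * S = 1) (hSH : Sᴴ * H = H * S)
    (hg : IsUnit g) (hgH : gᴴ * H * g = H) (hgS : g * S = -(S * g)) :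
    ∃ z ∈ L, H.det = z * star z := by
  have hPL : (2⁻¹ : K) • (1 + S) ∈ L.toSubring.matrix := fun i j =>
    L.mul_mem (L.inv_mem (ofNat_mem L 2)) (L.toSubring.matrix.add_mem (one_mem _) hSL i j)
  refine exists_mem_det_eq_mul_star hL hHL hPL hgL hH ?_ ?_ hg hgH ?_
  · change _ * _ = _
    rw [smul_mul_smul_comm, mul_add, add_mul, add_mul, hS]
    simp only [Matrix.one_mul, Matrix.mul_one]
    module
  · rw [conjTranspose_smul, conjTranspose_add, conjTranspose_one, star_inv₀, star_ofNat,
      smul_mul_assoc, add_mul, hSH, mul_smul_comm, mul_add, Matrix.one_mul, Matrix.mul_one]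
  · rw [mul_smul_comm, mul_add, hgS, sub_mul, smul_mul_assoc, add_mul, Matrix.one_mul,
      Matrix.mul_one]
    module

-- `q⁻¹` times the Gauss sum is a self-adjoint involution anticommuting with `g`.
theorem exists_mem_det_eq_mul_star_of_addChar {F : Type*} [Field F] [Fintype F] [DecidableEq F]
    (hF : ringChar F ≠ 2) {q : ℕ} (hcard : Fintype.card F = q ^ 2)
    {L : Subfield K} (hL : ∀ x ∈ L, star x ∈ L) {H g : Matrix n n K}
    {r : AddChar F (Matrix n n K)} (hHL : H ∈ L.toSubring.matrix)
    (hrL : ∀ a, r a ∈ L.toSubring.matrix) (hgL : g ∈ L.toSubring.matrix)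
    (hH : H.IsHermitian) (hrH : ∀ a, (r a)ᴴ * H * r a = H) (hr : ∑ a, r a = 0)
    (hg : IsUnit g) (hgH : gᴴ * H * g = H) {c : F} (hc : quadraticChar F c = -1)
    (hgr : ∀ a, g * r a = r (c * a) * g) : ∃ z ∈ L, H.det = z * star z := by
  set G := quadraticGaussSum r
  have hη := quadraticChar_neg_one_of_card_eq_sq hcard
  have hq : (q : K) ≠ 0 := by
    intro h
    simp [Nat.cast_eq_zero.1 h] at hcard
  have hGG : G * G = ((q : K) * q) • 1 := by
    rw [quadraticGaussSum_mul_self hF hr, hη, one_mul, hcard, ← sq,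
      ← Algebra.algebraMap_eq_smul_one, map_pow, map_natCast, Int.cast_natCast, Nat.cast_pow]
  have hGL : G ∈ L.toSubring.matrix := sum_mem fun a _ => zsmul_mem (hrL a) _
  have hGH : Gᴴ * H = H * G := by
    rw [conjTranspose_quadraticGaussSum_mul r fun a => conjTranspose_mul_eq_mul_of_mul_eq_one
      (hrH a) (by rw [← AddChar.map_add_eq_mul, add_neg_cancel, AddChar.map_zero_eq_one]),
      hη, one_smul]
  have hgG : g * G = -(G * g) := by
    rw [mul_quadraticGaussSum r (ne_zero_of_quadraticChar_eq_neg_one hc) hgr, hc, neg_one_smul]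
  refine exists_mem_det_eq_mul_star_of_involution (S := (q : K)⁻¹ • G) hL hHL
    (fun i j => L.mul_mem (L.inv_mem (natCast_mem L q)) (hGL i j)) hgL hH ?_ ?_ hg hgH ?_
  · rw [smul_mul_smul_comm, hGG, smul_smul, ← mul_inv, inv_mul_cancel₀ (mul_ne_zero hq hq),
      one_smul]
  · rw [conjTranspose_smul, star_inv₀, star_natCast, smul_mul_assoc, hGH, mul_smul_comm]
  · rw [mul_smul_comm, hgG, smul_mul_assoc, smul_neg]

end NormDeterminant

section Representation

open Representation

variable {k G V : Type*} [Field k] [Group G] [AddCommGroup V] [Module k V]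
  {ρ : Representation k G V}

theorem eq_zero_of_forall_mul_eq_self (hρ : ρ.invariants = ⊥) {f : Module.End k V}
    (hf : ∀ g, ρ g * f = f) : f = 0 :=
  LinearMap.ext fun v => (Submodule.eq_bot_iff _).1 hρ _
    ((mem_invariants ρ _).2 fun g => LinearMap.congr_fun (hf g) v)

theorem sum_eq_zero_of_invariants_eq_bot [Fintype G] (hρ : ρ.invariants = ⊥) : ∑ g, ρ g = 0 :=
  eq_zero_of_forall_mul_eq_self hρ fun g => by
    simp only [Finset.mul_sum, ← map_mul]
    exact Equiv.sum_comp (Equiv.mulLeft g) ρ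

theorem character_eq_zero_of_isConj_mul [CharZero k] {N : Subgroup G} [Finite N]
    (hN : invariants (ρ.comp N.subtype) = ⊥) {x : G} (hx : ∀ z ∈ N, IsConj x (x * z)) :
    ρ.character x = 0 := by
  have := Fintype.ofFinite N
  have hconst (z : N) : ρ.character (x * z) = ρ.character x := by
    obtain ⟨w, hw⟩ := isConj_iff.1 (hx z z.2)
    rw [← hw, char_conj]
  have hsum : ∑ z : N, ρ.character (x * z) = 0 := by
    simp only [character, map_mul, ← map_sum, ← Finset.mul_sum]
    rw [show ∑ z : N, ρ z = 0 from sum_eq_zero_of_invariants_eq_bot hN, mul_zero, map_zero]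
  simpa [hconst] using hsum

theorem card_dvd_finrank_of_character_eq_zero [CharZero k] [FiniteDimensional k V] [Finite G]
    (h : ∀ g, g ≠ 1 → ρ.character g = 0) : Nat.card G ∣ Module.finrank k V := by
  have := Fintype.ofFinite G
  have hG : (Nat.card G : k) ≠ 0 := Nat.cast_ne_zero.2 Nat.card_pos.ne'
  have := invertibleOfNonzero hG
  have hsum := card_inv_mul_sum_char_eq_finrank ρ
  rw [Fintype.sum_eq_single 1 h, char_one, inv_mul_eq_iff_eq_mul₀ hG] at hsum
  exact ⟨_, mod_cast hsum⟩

theorem le_ker_of_invariants_eq_top {N : Subgroup G} (hN : invariants (ρ.comp N.subtype) = ⊤) :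
    N ≤ ρ.ker := fun g hg =>
  LinearMap.ext fun v => (mem_invariants (ρ.comp N.subtype) v).1 (hN ▸ Submodule.mem_top) ⟨g, hg⟩

theorem nontrivial_of_isIrreducible [IsIrreducible ρ] : Nontrivial V :=
  (Submodule.nontrivial_iff k).1
    (Subrepresentation.toSubmodule_injective (ρ := ρ)).nontrivial

theorem invariants_eq_bot_or_eq_top [IsIrreducible ρ] (N : Subgroup G) [N.Normal] :
    invariants (ρ.comp N.subtype) = ⊥ ∨ invariants (ρ.comp N.subtype) = ⊤ :=
  (eq_bot_or_eq_top (⟨_, le_comap_invariants ρ N⟩ : Subrepresentation ρ)).imp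
    (congrArg Subrepresentation.toSubmodule) (congrArg Subrepresentation.toSubmodule)

variable [IsAlgClosed k] [FiniteDimensional k V]

theorem exists_forall_apply_eq_smul [IsIrreducible ρ] {g : G} (hg : ∀ h, Commute (ρ g) (ρ h)) :
    ∃ c : k, ∀ v, ρ g v = c • v := by
  obtain ⟨c, hc⟩ := (IsIrreducible.algebraMap_intertwiningMap_bijective_of_isAlgClosed
    (ρ := ρ)).2 ⟨ρ g, hg⟩
  exact ⟨c, fun v => (congrArg (fun f : IntertwiningMap ρ ρ => f v) hc).symm⟩

theorem finrank_eq_one_of_commute [IsIrreducible ρ] (h : ∀ g g', Commute (ρ g) (ρ g')) :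
    Module.finrank k V = 1 := by
  have := nontrivial_of_isIrreducible (ρ := ρ)
  obtain ⟨v, hv⟩ := exists_ne (0 : V)
  let W : Subrepresentation ρ :=
    { toSubmodule := k ∙ v
      apply_mem_toSubmodule g w hw := by
        obtain ⟨c, hc⟩ := exists_forall_apply_eq_smul (h g)
        exact hc w ▸ Submodule.smul_mem _ c hw }
  refine (finrank_eq_one_iff_of_nonzero v hv).2 ?_
  refine (eq_bot_or_eq_top W).elim (fun hW => ?_) (congrArg Subrepresentation.toSubmodule)
  exact absurd (Submodule.span_singleton_eq_bot.1 (congrArg Subrepresentation.toSubmodule hW)) hv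

theorem isIrreducible_of_character_eq [CharZero k] [Finite G] {W : Type*} [AddCommGroup W]
    [Module k W] [FiniteDimensional k W] {σ : Representation k G W} [IsIrreducible ρ]
    (h : σ.character = ρ.character) : IsIrreducible σ := by
  have := Fintype.ofFinite G
  have := invertibleOfNonzero (Nat.cast_ne_zero (R := k).2 (Nat.card_pos (α := G)).ne')
  have hmul : Module.finrank k (IntertwiningMap ρ σ) = 1 := by
    rw [← IsIrreducible.finrank_intertwiningMap_self ρ, ← Nat.cast_inj (R := k),
      ← card_inv_mul_sum_char_mul_char_eq_finrank,
      ← card_inv_mul_sum_char_mul_char_eq_finrank, h]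
  have hfinrank : Module.finrank k V = Module.finrank k W := by
    rw [← Nat.cast_inj (R := k), ← char_one ρ, ← char_one σ, h]
  have := Module.nontrivial_of_finrank_pos (hmul.symm ▸ one_pos)
  obtain ⟨f, hf⟩ := exists_ne (0 : IntertwiningMap ρ σ)
  have hinj : Function.Injective f := (IsIrreducible.injective_or_eq_zero f).resolve_right hf
  have hbij : Function.Bijective f :=
    ⟨hinj, (f.toLinearMap.injective_iff_surjective_of_finrank_eq_finrank hfinrank).1 hinj⟩
  have := (irreducible_iff_isSimpleModule_asModule ρ).1 inferInstance
  exact (irreducible_iff_isSimpleModule_asModule σ).2 <| IsSimpleModule.congr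
    (LinearEquiv.ofBijective (IntertwiningMap.equivLinearMapAsModule ρ σ f) hbij).symm

end Representation

section MatrixRepresentation

variable {G : Type} [Group G] {n : ℕ}

/-- A matrix representation, regarded as a linear representation on column vectors. -/
def toRepresentation (ρ : G →* GL (Fin n) ℂ) : Representation ℂ G (Fin n → ℂ) :=
  (toLinAlgEquiv' : Matrix (Fin n) (Fin n) ℂ ≃ₐ[ℂ] _).toRingHom.toMonoidHom.comp
    ((Units.coeHom _).comp ρ)

theorem character_toRepresentation (ρ : G →* GL (Fin n) ℂ) :
    (toRepresentation ρ).character = charOf ρ :=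
  funext fun g => trace_toLin'_eq (ρ g).val

theorem IsIrredRep.isIrreducible {ρ : G →* GL (Fin n) ℂ} (hρ : IsIrredRep ρ) :
    (toRepresentation ρ).IsIrreducible where
  exists_pair_ne := by
    have : Nonempty (Fin n) := ⟨⟨0, hρ.1⟩⟩
    exact ⟨⊥, ⊤, fun h => bot_ne_top (congrArg Subrepresentation.toSubmodule h)⟩
  eq_bot_or_eq_top W := (hρ.2 W.toSubmodule W.apply_mem_toSubmodule).imp
    (Subrepresentation.toSubmodule_injective ·) (Subrepresentation.toSubmodule_injective ·)

theorem IsIrrChar.isIrreducible [Finite G] {ρ : G →* GL (Fin n) ℂ} (hρ : IsIrrChar (charOf ρ)) :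
    (toRepresentation ρ).IsIrreducible := by
  obtain ⟨m, σ, hσ, h⟩ := hρ
  have := hσ.isIrreducible
  exact isIrreducible_of_character_eq (ρ := toRepresentation σ) <| by
    rw [character_toRepresentation, character_toRepresentation, h]

end MatrixRepresentation

theorem iterateFrobenius_involutive_of_card {p k : ℕ} {F : Type*} [Field F] [Fintype F]
    [ExpChar F p] (hF : Fintype.card F = (p ^ k) ^ 2) :
    Function.Involutive (iterateFrobenius F p k) := fun x => by
  rw [iterateFrobenius_def, iterateFrobenius_def, ← pow_mul, ← sq, ← hF, FiniteField.pow_card]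

namespace Borel

variable {p k : ℕ} {F : Type} [Field F] [ExpChar F p]

local notation "φ" => iterateFrobenius F p k

/-- The inclusion of the Borel subgroup into the `3 × 3` matrices. -/
def toMatrix : Borel p k F →* Matrix (Fin 3) (Fin 3) F where
  toFun x := x.1.1.1
  map_one' := rfl
  map_mul' _ _ := rfl

theorem toMatrix_injective : Function.Injective (toMatrix (p := p) (k := k) (F := F)) :=
  fun _ _ h => Subtype.ext (Subtype.ext (Subtype.ext h))

theorem toMatrix_apply_of_lt (x : Borel p k F) {i j : Fin 3} (hij : j < i) :
    toMatrix x i j = 0 :=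
  x.2 hij

theorem Om_eq : Om F = !![0, 0, 1; 0, 1, 0; 1, 0, 0] := by
  ext i j
  fin_cases i <;> fin_cases j <;> simp [Om]

theorem toMatrix_form (x : Borel p k F) (i j : Fin 3) :
    φ (toMatrix x 2 i) * toMatrix x 0 j + φ (toMatrix x 1 i) * toMatrix x 1 j +
      φ (toMatrix x 0 i) * toMatrix x 2 j = Om F i j := by
  have h : ((toMatrix x).map φ)ᵀ * Om F * toMatrix x = Om F := x.1.2
  simpa [mul_apply, Fin.sum_univ_three, Om_eq] using congrFun₂ h i j

/-- The element of the Borel subgroup with a given underlying matrix. -/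
def ofMatrix (M : Matrix (Fin 3) (Fin 3) F) (hdet : M.det = 1)
    (hform : (M.map φ)ᵀ * Om F * M = Om F) (htri : BlockTriangular M id) : Borel p k F :=
  ⟨⟨⟨M, hdet⟩, hform⟩, htri⟩

/-- The top left `2 × 2` block; its kernel is the centre of the unipotent radical. -/
def topLeftBlock : Borel p k F →* Matrix (Fin 2) (Fin 2) F where
  toFun x := (toMatrix x).submatrix Fin.castSucc Fin.castSucc
  map_one' := by rw [map_one, submatrix_one _ (Fin.castSucc_injective 2)]
  map_mul' x y := by
    ext i j
    have hy : toMatrix y 2 j.castSucc = 0 := toMatrix_apply_of_lt y j.castSucc_lt_last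
    simp [mul_apply, Fin.sum_univ_castSucc (n := 2), hy]

/-- The top left entry; its kernel is the unipotent radical. -/
def topLeftEntry : Borel p k F →* F where
  toFun x := toMatrix x 0 0
  map_one' := by rw [map_one, one_apply_eq]
  map_mul' x y := by
    simp [mul_apply, Fin.sum_univ_three, toMatrix_apply_of_lt y (show (0 : Fin 3) < 1 by decide),
      toMatrix_apply_of_lt y (show (0 : Fin 3) < 2 by decide)]

theorem topLeftBlock_eq_of_topLeftEntry_eq_one {x : Borel p k F} (hx : topLeftEntry x = 1) :
    topLeftBlock x = !![1, toMatrix x 0 1; 0, 1] := by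
  have h00 : toMatrix x 0 0 = 1 := hx
  have h10 : toMatrix x 1 0 = 0 := toMatrix_apply_of_lt x (by decide)
  have h20 : toMatrix x 2 0 = 0 := toMatrix_apply_of_lt x (by decide)
  have h21 : toMatrix x 2 1 = 0 := toMatrix_apply_of_lt x (by decide)
  have h22 : toMatrix x 2 2 = 1 := by
    simpa [h00, h10, h20, Om_eq] using toMatrix_form x 0 2
  have h11 : toMatrix x 1 1 = 1 := by
    have hdet : (toMatrix x).det = 1 := x.1.1.2
    simpa [det_fin_three, h10, h20, h21, h00, h22] using hdet
  ext i j
  fin_cases i <;> fin_cases j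
  exacts [h00, rfl, h10, h11]

theorem exists_toMatrix_eq_of_mem_ker_topLeftBlock {z : Borel p k F} (hz : z ∈ topLeftBlock.ker) :
    ∃ t, φ t = -t ∧ toMatrix z = !![1, 0, t; 0, 1, 0; 0, 0, 1] := by
  have hblock (i j : Fin 2) : toMatrix z i.castSucc j.castSucc = (1 : Matrix _ _ F) i j :=
    congrFun₂ hz i j
  have h00 : toMatrix z 0 0 = 1 := hblock 0 0
  have h01 : toMatrix z 0 1 = 0 := hblock 0 1
  have h10 : toMatrix z 1 0 = 0 := hblock 1 0
  have h11 : toMatrix z 1 1 = 1 := hblock 1 1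
  have h20 : toMatrix z 2 0 = 0 := toMatrix_apply_of_lt z (by decide)
  have h21 : toMatrix z 2 1 = 0 := toMatrix_apply_of_lt z (by decide)
  have h22 : toMatrix z 2 2 = 1 := by simpa [h00, h10, h20, Om_eq] using toMatrix_form z 0 2
  have h12 : toMatrix z 1 2 = 0 := by simpa [h01, h11, h21, Om_eq] using toMatrix_form z 1 2
  refine ⟨toMatrix z 0 2, eq_neg_of_add_eq_zero_right ?_, ?_⟩
  · simpa [h12, h22, Om_eq] using toMatrix_form z 2 2
  · ext i j
    fin_cases i <;> fin_cases j <;> first | assumption | rfl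

section Elements

variable (hφ : Function.Involutive (iterateFrobenius F p k))

/-- The torus element with eigenvalue `s` on the isotropic line fixed by the Borel subgroup. -/
def torus {s : F} (hs : s ≠ 0) : Borel p k F :=
  have hs' : φ s ≠ 0 := (map_ne_zero _).2 hs
  ofMatrix (diagonal ![s, φ s / s, (φ s)⁻¹])
    (by simp [det_diagonal, Fin.prod_univ_three]; field_simp)
    (by
      rw [Om_eq]
      ext i j
      fin_cases i <;> fin_cases j <;> simp [mul_apply, Fin.sum_univ_three, hφ s, hs, hs'])
    (blockTriangular_diagonal _)

variable (h2 : (2 : F) ≠ 0)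

/-- A transversal for the centre of the unipotent radical. -/
def unipotent (a : F) : Borel p k F :=
  ofMatrix !![1, a, -(a * φ a) / 2; 0, 1, -φ a; 0, 0, 1]
    (by simp [det_fin_three])
    (by
      rw [Om_eq]
      ext i j
      fin_cases i <;> fin_cases j <;>
        simp [mul_apply, Fin.sum_univ_three, hφ a, map_ofNat]
      field_simp
      ring)
    (by
      intro i j hij
      fin_cases i <;> fin_cases j <;> simp_all)

theorem toMatrix_unipotent (a : F) :
    toMatrix (unipotent hφ h2 a) = !![1, a, -(a * φ a) / 2; 0, 1, -φ a; 0, 0, 1] := rfl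

theorem topLeftBlock_unipotent (a : F) :
    topLeftBlock (unipotent hφ h2 a) = !![1, a; 0, 1] :=
  topLeftBlock_eq_of_topLeftEntry_eq_one rfl

theorem topLeftBlock_unipotent_add (a b : F) :
    topLeftBlock (unipotent hφ h2 (a + b)) =
      topLeftBlock (unipotent hφ h2 a * unipotent hφ h2 b) := by
  simp [topLeftBlock_unipotent, add_comm]

theorem topLeftBlock_torus {s : F} (hs : s ≠ 0) :
    topLeftBlock (torus hφ hs) = !![s, 0; 0, φ s / s] := by
  ext i j
  fin_cases i <;> fin_cases j <;> rfl

theorem topLeftBlock_torus_mul_unipotent {s : F} (hs : s ≠ 0) (a : F) :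
    topLeftBlock (torus hφ hs * unipotent hφ h2 a) =
      topLeftBlock (unipotent hφ h2 (s ^ 2 / φ s * a) * torus hφ hs) := by
  have hs' : φ s ≠ 0 := (map_ne_zero _).2 hs
  simp only [map_mul, topLeftBlock_unipotent, topLeftBlock_torus]
  simp
  field_simp

theorem unipotent_one_pow (i : ℕ) : unipotent hφ h2 1 ^ i = unipotent hφ h2 (i : F) := by
  induction i with
  | zero =>
    apply toMatrix_injective
    simp [toMatrix_unipotent, one_fin_three]
  | succ i ih =>
    apply toMatrix_injective
    rw [pow_succ, ih, map_mul, toMatrix_unipotent, toMatrix_unipotent, toMatrix_unipotent]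
    ext i j
    fin_cases i <;> fin_cases j <;> simp [mul_apply, Fin.sum_univ_three]
    all_goals field_simp
    all_goals ring

theorem unipotent_one_pow_eq_one_iff {i : ℕ} : unipotent hφ h2 1 ^ i = 1 ↔ (i : F) = 0 := by
  rw [unipotent_one_pow]
  refine ⟨fun h => ?_, fun h => ?_⟩
  · simpa [topLeftBlock_unipotent] using congrFun₂ (congrArg topLeftBlock h) 0 1
  · rw [h, ← Nat.cast_zero, ← unipotent_one_pow, pow_zero]

theorem isConj_unipotent_mul {a : F} (ha : φ a = a) (ha0 : a ≠ 0) {z : Borel p k F}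
    (hz : z ∈ topLeftBlock.ker) : IsConj (unipotent hφ h2 a) (unipotent hφ h2 a * z) := by
  obtain ⟨t, ht, hz⟩ := exists_toMatrix_eq_of_mem_ker_topLeftBlock hz
  suffices h : unipotent hφ h2 (-t / (2 * a)) * unipotent hφ h2 a =
      unipotent hφ h2 a * z * unipotent hφ h2 (-t / (2 * a)) from
    isConj_iff.2 ⟨_, mul_inv_eq_of_eq_mul h⟩
  apply toMatrix_injective
  simp only [map_mul, toMatrix_unipotent, hz, map_div₀, map_neg, ht, ha, map_ofNat]
  ext i j
  fin_cases i <;> fin_cases j <;> simp [mul_apply, Fin.sum_univ_three]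
  all_goals field_simp
  all_goals ring

end Elements

section Representation

open Representation

variable {K V : Type*} [Field K] [AddCommGroup V] [Module K V]
  {R : Representation K (Borel p k F) V}

theorem map_eq_map_of_topLeftBlock_eq {M : Type*} [MulOneClass M] {f : Borel p k F →* M}
    (hf : topLeftBlock.ker ≤ f.ker) {x y : Borel p k F} (h : topLeftBlock x = topLeftBlock y) :
    f x = f y :=
  f.eq_iff.2 (hf ((MonoidHom.eq_iff _).1 h))

theorem commute_map_of_ker_topLeftEntry_le {M : Type*} [Monoid M] {f : Borel p k F →* M}
    (hf : topLeftEntry.ker ≤ f.ker) (x y : Borel p k F) : Commute (f x) (f y) := by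
  rw [Commute, SemiconjBy, ← map_mul, ← map_mul]
  exact f.eq_iff.2 (hf (topLeftEntry.eq_iff.1 (by rw [map_mul, map_mul, mul_comm])))

theorem invariants_ker_topLeftEntry_eq_bot [IsAlgClosed K] [FiniteDimensional K V]
    [IsIrreducible R] (hV : Module.finrank K V ≠ 1) :
    invariants (R.comp topLeftEntry.ker.subtype) = ⊥ :=
  (invariants_eq_bot_or_eq_top topLeftEntry.ker).resolve_right fun h =>
    hV (finrank_eq_one_of_commute (ρ := R)
      (commute_map_of_ker_topLeftEntry_le (le_ker_of_invariants_eq_top h)))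

theorem ker_topLeftBlock_le_ker [Finite F] [CharZero K] [FiniteDimensional K V] [IsIrreducible R]
    (hφ : Function.Involutive (iterateFrobenius F p k)) (h2 : (2 : F) ≠ 0)
    (hV : ¬ringChar F ∣ Module.finrank K V) : topLeftBlock.ker ≤ R.ker := by
  refine le_ker_of_invariants_eq_top <|
    (invariants_eq_bot_or_eq_top (ρ := R) topLeftBlock.ker).resolve_left fun hbot => hV ?_
  set u := unipotent hφ h2 1
  have hchar (g : Subgroup.zpowers u) (hg : g ≠ 1) :
      character (R.comp (Subgroup.zpowers u).subtype) g = 0 := by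
    obtain ⟨i, hi⟩ := mem_powers_iff_mem_zpowers.2 g.2
    replace hi : u ^ i = g := hi
    have hi0 : (i : F) ≠ 0 := fun h =>
      hg (Subtype.ext (hi.symm.trans ((unipotent_one_pow_eq_one_iff hφ h2).2 h)))
    change R.character g = 0
    rw [← hi, unipotent_one_pow]
    exact character_eq_zero_of_isConj_mul hbot fun z hz =>
      isConj_unipotent_mul hφ h2 (map_natCast _ i) hi0 hz
  calc ringChar F
    _ ∣ orderOf u := ringChar.dvd ((unipotent_one_pow_eq_one_iff hφ h2).1 (pow_orderOf_eq_one u))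
    _ = Nat.card (Subgroup.zpowers u) := (Nat.card_zpowers u).symm
    _ ∣ Module.finrank K V := card_dvd_finrank_of_character_eq_zero hchar

variable (hφ : Function.Involutive (iterateFrobenius F p k)) (h2 : (2 : F) ≠ 0)

theorem sum_unipotent_eq_zero [Fintype F] (hZ : topLeftBlock.ker ≤ R.ker)
    (hU : invariants (R.comp topLeftEntry.ker.subtype) = ⊥) :
    ∑ a, R (unipotent hφ h2 a) = 0 := by
  refine eq_zero_of_forall_mul_eq_self hU fun y => ?_
  have hy : R y = R (unipotent hφ h2 (toMatrix y.1 0 1)) :=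
    map_eq_map_of_topLeftBlock_eq hZ <| by
      rw [topLeftBlock_unipotent, topLeftBlock_eq_of_topLeftEntry_eq_one y.2]
  change R y * _ = _
  rw [hy, Finset.mul_sum, ← Equiv.sum_comp (Equiv.addLeft (toMatrix y.1 0 1)) fun a =>
    R (unipotent hφ h2 a)]
  refine Finset.sum_congr rfl fun a _ => ?_
  rw [← map_mul, Equiv.coe_addLeft]
  exact (map_eq_map_of_topLeftBlock_eq hZ (topLeftBlock_unipotent_add hφ h2 _ a)).symm

/-- The action of the unipotent radical modulo its centre, a copy of `F`, under a homomorphism `f`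
trivial on the centre. -/
def unipotentAddChar {M : Type*} [Monoid M] (f : Borel p k F →* M)
    (hf : topLeftBlock.ker ≤ f.ker) : AddChar F M where
  toFun a := f (unipotent hφ h2 a)
  map_zero_eq_one' := by
    rw [← map_one f]
    exact map_eq_map_of_topLeftBlock_eq hf (by rw [topLeftBlock_unipotent, map_one, one_fin_two])
  map_add_eq_mul' a b := by
    rw [← map_mul]
    exact map_eq_map_of_topLeftBlock_eq hf (topLeftBlock_unipotent_add hφ h2 a b)

end Representation

theorem exists_mem_det_eq_mul_star [Fintype F] {n : ℕ} {ρ : Borel p k F →* GL (Fin n) ℂ}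
    [(toRepresentation ρ).IsIrreducible] (hp : Odd p) (hF : Fintype.card F = (p ^ k) ^ 2)
    (hn1 : n ≠ 1) (hn : ¬ringChar F ∣ n) {L : Subfield ℂ} (hL : ∀ x ∈ L, star x ∈ L)
    (hρL : ∀ g, (ρ g).val ∈ L.toSubring.matrix) {H : Matrix (Fin n) (Fin n) ℂ}
    (hHL : H ∈ L.toSubring.matrix) (hH : H.IsHermitian)
    (hρH : ∀ g, (ρ g).valᴴ * H * (ρ g).val = H) : ∃ z ∈ L, H.det = z * star z := by
  classical
  have hφ := iterateFrobenius_involutive_of_card hF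
  have hF2 : ringChar F ≠ 2 := by
    rw [Ne, FiniteField.even_card_iff_char_two, ← Nat.even_iff, Nat.not_even_iff_odd, hF]
    exact hp.pow.pow
  have h2 := Ring.two_ne_zero hF2
  let f : Borel p k F →* Matrix (Fin n) (Fin n) ℂ := (Units.coeHom _).comp ρ
  have hZ : topLeftBlock.ker ≤ (toRepresentation ρ).ker := ker_topLeftBlock_le_ker hφ h2 (by simpa)
  have hf : topLeftBlock.ker ≤ f.ker := fun z hz =>
    toLinAlgEquiv'.injective ((hZ hz).trans (map_one _).symm)
  have hsum : ∑ a, unipotentAddChar hφ h2 f hf a = 0 :=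
    toLinAlgEquiv'.injective <| by
      rw [map_sum, map_zero]
      exact sum_unipotent_eq_zero hφ h2 hZ (invariants_ker_topLeftEntry_eq_bot (by simpa))
  obtain ⟨s, hs⟩ := quadraticChar_exists_neg_one hF2
  have hs0 := ne_zero_of_quadraticChar_eq_neg_one hs
  have hc : quadraticChar F (s ^ 2 / φ s) = -1 := by
    rw [iterateFrobenius_def]
    exact quadraticChar_sq_div_pow hs hp.pow
  have hgr (a : F) : f (torus hφ hs0) * unipotentAddChar hφ h2 f hf a =
      unipotentAddChar hφ h2 f hf (s ^ 2 / φ s * a) * f (torus hφ hs0) :=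
    (map_mul f _ _).symm.trans <| (map_eq_map_of_topLeftBlock_eq hf
      (topLeftBlock_torus_mul_unipotent hφ h2 hs0 a)).trans (map_mul f _ _)
  exact exists_mem_det_eq_mul_star_of_addChar (r := unipotentAddChar hφ h2 f hf)
    (g := f (torus hφ hs0)) hF2 hF hL hHL (fun _ => hρL _) (hρL _) hH (fun _ => hρH _) hsum
    (ρ _).isUnit (hρH _) hc hgr

end Borel

section CharacterField

theorem charOf_one {G : Type} [Group G] {n : ℕ} (ρ : G →* GL (Fin n) ℂ) : charOf ρ 1 = n := by
  simp [charOf]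

theorem star_charOf {G : Type} [Group G] {n : ℕ} {ρ : G →* GL (Fin n) ℂ}
    {H : Matrix (Fin n) (Fin n) ℂ} (hH : IsUnit H.det)
    (hρH : ∀ g, (ρ g).valᴴ * H * (ρ g).val = H) (g : G) : star (charOf ρ g) = charOf ρ g⁻¹ := by
  have hinv : (ρ g).val * (ρ g⁻¹).val = 1 := by rw [map_inv, Units.mul_inv]
  have hconj : (ρ g).valᴴ = H * (ρ g⁻¹).val * H⁻¹ := by
    rw [← conjTranspose_mul_eq_mul_of_mul_eq_one (hρH g) hinv, mul_nonsing_inv_cancel_right _ _ hH]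
  rw [charOf, ← trace_conjTranspose, hconj, trace_mul_cycle, nonsing_inv_mul _ hH, Matrix.one_mul,
    charOf]

theorem star_mem_charField {G : Type} [Group G] {χ : G → ℂ} (hχ : ∀ g, star (χ g) = χ g⁻¹) {x : ℂ}
    (hx : x ∈ charField χ) : star x ∈ charField χ := by
  have hle : charField χ ≤ (charField χ).comap (starRingEnd ℂ) := by
    refine Subfield.closure_le.2 ?_
    rintro _ ⟨g, rfl⟩
    exact Subfield.subset_closure ⟨g⁻¹, (hχ g).symm⟩
  exact hle hx

end CharacterField

section Degree

theorem gcd_mul_sq_sub_one_div_gcd (q : ℕ) :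
    Nat.gcd 3 (q + 1) * ((q ^ 2 - 1) / Nat.gcd 3 (q + 1)) = q ^ 2 - 1 :=
  Nat.mul_div_cancel' <| (Nat.gcd_dvd_right 3 (q + 1)).trans <| by
    rw [← one_pow 2, Nat.sq_sub_sq]
    exact dvd_mul_right _ _

theorem eight_dvd_sq_sub_one_div_gcd {q : ℕ} (hq : Odd q) :
    8 ∣ (q ^ 2 - 1) / Nat.gcd 3 (q + 1) := by
  have hcop : Nat.Coprime 8 (Nat.gcd 3 (q + 1)) :=
    Nat.Coprime.coprime_dvd_right (Nat.gcd_dvd_left 3 (q + 1)) (by decide)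
  refine hcop.dvd_of_dvd_mul_left ?_
  rw [gcd_mul_sq_sub_one_div_gcd]
  exact Nat.eight_dvd_sq_sub_one_of_odd hq

theorem not_dvd_sq_sub_one_div_gcd {r q : ℕ} (hr : r ≠ 1) (hq : q ≠ 0) (hrq : r ∣ q ^ 2) :
    ¬r ∣ (q ^ 2 - 1) / Nat.gcd 3 (q + 1) := fun h => by
  have hsub : r ∣ q ^ 2 - 1 := gcd_mul_sq_sub_one_div_gcd q ▸ h.mul_left _
  refine hr (Nat.dvd_one.1 ?_)
  rwa [← Nat.dvd_add_right hsub, Nat.sub_add_cancel (Nat.one_le_pow _ _ hq.pos)]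

theorem even_mul_sub_one_div_two {n : ℕ} (hn : 4 ∣ n) : Even (n * (n - 1) / 2) := by
  obtain ⟨m, rfl⟩ := hn
  rw [show 4 * m * (4 * m - 1) = 2 * (2 * (m * (4 * m - 1))) by ring,
    Nat.mul_div_cancel_left _ two_pos]
  exact even_two_mul _

theorem ringChar_dvd_card (F : Type*) [Field F] [Fintype F] : ringChar F ∣ Fintype.card F :=
  ringChar.dvd (FiniteField.cast_card_eq_zero F)

end Degree

theorem stmt13_general (p k q : ℕ) (hpodd : Odd p) (hq : q = p ^ k)
    (F : Type) [Field F] [Fintype F] [ExpChar F p] (hF : Fintype.card F = q ^ 2)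
    (χ : ↥(Borel p k F) → ℂ) (hχ : IsIrrChar χ)
    (hdeg : χ 1 = (((q ^ 2 - 1) / Nat.gcd 3 (q + 1) : ℕ) : ℂ)) :
    HasUnitaryDisc χ 1 := by
  rintro n ρ rfl hρL H hHL hdet hH hρH
  have hqodd : Odd q := hq ▸ hpodd.pow
  have hn : n = (q ^ 2 - 1) / Nat.gcd 3 (q + 1) :=
    Nat.cast_injective ((charOf_one ρ).symm.trans hdeg)
  have h8 : 8 ∣ n := hn ▸ eight_dvd_sq_sub_one_div_gcd hqodd
  have hchar : ¬ringChar F ∣ n :=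
    hn ▸ not_dvd_sq_sub_one_div_gcd CharP.ringChar_ne_one hqodd.pos.ne' (hF ▸ ringChar_dvd_card F)
  have := hχ.isIrreducible
  obtain ⟨z, hzL, hz⟩ := Borel.exists_mem_det_eq_mul_star hpodd (hq ▸ hF) (by lia) hchar
    (fun _ => star_mem_charField (star_charOf hdet hρH)) hρL hHL hH hρH
  refine ⟨z, hzL, ?_, ?_⟩
  · rintro rfl
    exact hdet.ne_zero (hz.trans (zero_mul _))
  · rw [(even_mul_sub_one_div_two ((by decide : 4 ∣ 8).trans h8)).neg_one_pow, hz]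
    rfl

/-- every irreducible character of the Borel subgroup of `SU₃(q)`,
`q` odd, of degree `(q²-1)/gcd(3,q+1)` with non-real character field has unitary
discriminant `1`. -/
theorem stmt13 (p k q : ℕ) (hp : p.Prime) (hpodd : Odd p) (hk : 0 < k) (hq : q = p ^ k)
    (F : Type) [Field F] [Fintype F] [ExpChar F p] (hF : Fintype.card F = q ^ 2)
    (χ : ↥(Borel p k F) → ℂ) (hχ : IsIrrChar χ)
    (hdeg : χ 1 = (((q ^ 2 - 1) / Nat.gcd 3 (q + 1) : ℕ) : ℂ))
    (hnr : NotReal χ) :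
    HasUnitaryDisc χ 1 :=
  stmt13_general p k q hpodd hq F hF χ hχ hdeg

end Paper
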